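/- Let Λ > 0, κ > 0 and R > √(3/Λ), and set H := √(Λ/3). There exists ε > 0 (depending only on Λ, κ, R) such that for every C¹ solution h : [0,∞)×[0,R] → ℝ of the reduced Einstein-Λ-scalar field equation Dh = G(h − h̄) with sup_{u≥0,0≤r≤R}(|h(u,r)| + |∂_r h(u,r)|) < ε, there is a constant C > 0 such that the associated metric coefficients satisfy |f(u,r) − 1| ≤ C e^{−2Hu} and |f̃(u,r) − (1 − (Λ/3) r²)| ≤ C e^{−2Hu} for all u ≥ 0 and 0 ≤ r ≤ R; i.e. the metric coefficients converge exponentially in Bondi time to those of de Sitter spacetime in Bondi coordinates. -/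

import Mathlib

noncomputable section

open Real Set

/-- Radial average `h̄(u,r) = (1/r)∫₀ʳ h(u,s) ds`, with `h̄(u,0) = h(u,0)`. -/
def radAvg (h : ℝ → ℝ → ℝ) (u r : ℝ) : ℝ :=
  if r = 0 then h u 0 else (1 / r) * ∫ s in (0:ℝ)..r, h u s

/-- Metric coefficient `f(u,r) = exp((κ/2)∫₀ʳ (h−h̄)²/s ds)`. -/
def metricF (κ : ℝ) (h : ℝ → ℝ → ℝ) (u r : ℝ) : ℝ :=
  Real.exp ((κ / 2) * ∫ s in (0:ℝ)..r, (h u s - radAvg h u s) ^ 2 / s)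

/-- Metric coefficient `f̃(u,r) = (1/r)∫₀ʳ f ds − (Λ/r)∫₀ʳ f s² ds`, with `f̃(u,0)=1`. -/
def metricFt (Λ κ : ℝ) (h : ℝ → ℝ → ℝ) (u r : ℝ) : ℝ :=
  if r = 0 then 1
  else (1 / r) * (∫ s in (0:ℝ)..r, metricF κ h u s)
    - (Λ / r) * (∫ s in (0:ℝ)..r, metricF κ h u s * s ^ 2)

/-- Zeroth order coefficient `G(u,r) = (1/(2r))[(f − f̃) − Λ f r²]`. -/
def coefG (Λ κ : ℝ) (h : ℝ → ℝ → ℝ) (u r : ℝ) : ℝ :=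
  (1 / (2 * r)) * ((metricF κ h u r - metricFt Λ κ h u r) - Λ * metricF κ h u r * r ^ 2)

/-- Partial derivative of `h` in the Bondi time `u`, one-sided on `[0,∞)`. -/
def pdU (h : ℝ → ℝ → ℝ) (u r : ℝ) : ℝ :=
  derivWithin (fun u' => h u' r) (Ici 0) u

/-- Partial derivative of `h` in the radial coordinate `r`, on `[0,R]`. -/
def pdR (R : ℝ) (h : ℝ → ℝ → ℝ) (u r : ℝ) : ℝ :=
  derivWithin (fun r' => h u r') (Icc 0 R) r

/-- `h : [0,∞)×[0,R] → ℝ` is a C¹ solution of the reduced Einstein-Λ-scalar field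
equation `Dh = G(h − h̄)`: it is continuous with continuous partial derivatives on the
rectangular domain and satisfies the equation for `0 < r ≤ R`. -/
def IsC1Solution (Λ κ R : ℝ) (h : ℝ → ℝ → ℝ) : Prop :=
  ContinuousOn (fun p : ℝ × ℝ => h p.1 p.2) (Ici 0 ×ˢ Icc 0 R) ∧
  (∀ u ∈ Ici (0:ℝ), ∀ r ∈ Icc (0:ℝ) R,
      DifferentiableWithinAt ℝ (fun u' => h u' r) (Ici 0) u ∧
      DifferentiableWithinAt ℝ (fun r' => h u r') (Icc 0 R) r) ∧
  ContinuousOn (fun p : ℝ × ℝ => pdU h p.1 p.2) (Ici 0 ×ˢ Icc 0 R) ∧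
  ContinuousOn (fun p : ℝ × ℝ => pdR R h p.1 p.2) (Ici 0 ×ˢ Icc 0 R) ∧
  ∀ u ∈ Ici (0:ℝ), ∀ r ∈ Ioc (0:ℝ) R,
    pdU h u r - metricFt Λ κ h u r / 2 * pdR R h u r
      = coefG Λ κ h u r * (h u r - radAvg h u r)

/-! Write `H = √(Λ/3)`. On de Sitter spacetime `f̃ = 1 - H²r²` and `G = -H²r`, and differentiating
the linearised equation in `r` makes it local: `v = ∂ᵣh` solves
`∂ᵤv = ½(1 - H²r²) ∂ᵣv - 2H²r v`, for which `(1 + Hr)⁻⁴` is an eigenfunction with eigenvalue `-2H`.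
Since `R` lies beyond the cosmological horizon `r = 1/H`, the transport velocity points outwards
at `r = R`, and a maximum principle holds without boundary data. As `h` is only `C¹`, it is applied
to the two-point function `h(u,b) - h(u,a)` instead of `v`, against the barrier
`A e^{-Hu} |ρ(b) - ρ(a)|` with `ρ' = (1 + Hr)⁻⁴`, raised by a small term that is removed in the end.

The metric deviates from de Sitter quadratically in the Lipschitz constant of `h(u,·)`. For small
data the nonlinear terms therefore cost at most half of the linear rate `2H`; the Lipschitz constant
then decays like `e^{-Hu}` and the metric deviation like `e^{-2Hu}`. -/

open MeasureTheory intervalIntegral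
open scoped NNReal Topology

section RadialMean

variable {φ ψ : ℝ → ℝ} {A B R a b r γ : ℝ} {L : ℝ≥0}

/-- The mean of `φ` over `[0, r]`, rescaled to the unit interval so that the value at the centre
`r = 0` is `φ 0` without a case distinction. -/
def radialMean (φ : ℝ → ℝ) (r : ℝ) : ℝ :=
  ∫ t in (0 : ℝ)..1, φ (t * r)

@[simp]
theorem radialMean_zero (φ : ℝ → ℝ) : radialMean φ 0 = φ 0 := by
  simp [radialMean]

@[simp]
theorem radialMean_const (c r : ℝ) : radialMean (fun _ => c) r = c := by
  simp [radialMean]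

@[simp]
theorem radialMean_neg (φ : ℝ → ℝ) (r : ℝ) : radialMean (-φ) r = -radialMean φ r :=
  intervalIntegral.integral_neg

theorem mul_radialMean (φ : ℝ → ℝ) (r : ℝ) : r * radialMean φ r = ∫ s in (0 : ℝ)..r, φ s := by
  simp [radialMean, mul_integral_comp_mul_right]

theorem radAvg_eq_radialMean (h : ℝ → ℝ → ℝ) (u r : ℝ) : radAvg h u r = radialMean (h u) r := by
  unfold radAvg
  split_ifs with hr
  · rw [hr, radialMean_zero]
  · rw [← mul_radialMean, one_div, inv_mul_cancel_left₀ hr]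

theorem mul_mem_Icc_zero {t : ℝ} (ht : t ∈ Icc 0 1) (hr : r ∈ Icc 0 R) : t * r ∈ Icc 0 R :=
  ⟨mul_nonneg ht.1 hr.1, (mul_le_of_le_one_left hr.1 ht.2).trans hr.2⟩

theorem intervalIntegrable_comp_mul_right (hφ : ContinuousOn φ (Icc 0 r)) (hr : 0 ≤ r) :
    IntervalIntegrable (fun t => φ (t * r)) volume 0 1 := by
  refine (hφ.comp (by fun_prop) fun t ht => ?_).intervalIntegrable
  rw [uIcc_of_le zero_le_one] at ht
  exact mul_mem_Icc_zero ht ⟨hr, le_rfl⟩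

theorem radialMean_sub (hφ : ContinuousOn φ (Icc 0 r)) (hψ : ContinuousOn ψ (Icc 0 r))
    (hr : 0 ≤ r) : radialMean (φ - ψ) r = radialMean φ r - radialMean ψ r :=
  integral_sub (intervalIntegrable_comp_mul_right hφ hr) (intervalIntegrable_comp_mul_right hψ hr)

theorem radialMean_const_mul (c : ℝ) (φ : ℝ → ℝ) (r : ℝ) :
    radialMean (fun s => c * φ s) r = c * radialMean φ r :=
  integral_const_mul ..

theorem abs_radialMean_sub_radialMean_le (hφ : ContinuousOn φ (Icc 0 a))
    (hψ : ContinuousOn ψ (Icc 0 b)) (ha : 0 ≤ a) (hb : 0 ≤ b)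
    (hB : ∀ t ∈ Icc (0 : ℝ) 1, |φ (t * a) - ψ (t * b)| ≤ B) :
    |radialMean φ a - radialMean ψ b| ≤ B := by
  unfold radialMean
  rw [← integral_sub (intervalIntegrable_comp_mul_right hφ ha)
    (intervalIntegrable_comp_mul_right hψ hb)]
  have hB' : ∀ t ∈ uIoc (0 : ℝ) 1, ‖φ (t * a) - ψ (t * b)‖ ≤ B := by
    rw [uIoc_of_le zero_le_one]
    exact fun t ht => hB t (Ioc_subset_Icc_self ht)
  simpa using norm_integral_le_of_norm_le_const hB'

/-- `φ` is Lipschitz on `s` with constant `A` up to jumps of size `γ`: the regularity that survives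
at a fixed time in a barrier argument whose barrier has been raised by a constant. -/
def CoarseLipschitzOn (A γ : ℝ) (φ : ℝ → ℝ) (s : Set ℝ) : Prop :=
  ∀ x ∈ s, ∀ y ∈ s, |φ y - φ x| ≤ A * |y - x| + γ

theorem coarseLipschitzOn_zero_iff {s : Set ℝ} :
    CoarseLipschitzOn L 0 φ s ↔ LipschitzOnWith L φ s := by
  simp only [CoarseLipschitzOn, lipschitzOnWith_iff_dist_le_mul, Real.dist_eq, add_zero]
  exact ⟨fun h x hx y hy => h y hy x hx, fun h x hx y hy => h y hy x hx⟩

protected theorem CoarseLipschitzOn.radialMean (h : CoarseLipschitzOn A γ φ (Icc 0 R))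
    (hφ : ContinuousOn φ (Icc 0 R)) (hA : 0 ≤ A) :
    CoarseLipschitzOn A γ (radialMean φ) (Icc 0 R) := by
  intro x hx y hy
  refine abs_radialMean_sub_radialMean_le (hφ.mono (Icc_subset_Icc_right hy.2))
    (hφ.mono (Icc_subset_Icc_right hx.2)) hy.1 hx.1 fun t ht => ?_
  calc |φ (t * y) - φ (t * x)| ≤ A * |t * y - t * x| + γ :=
        h _ (mul_mem_Icc_zero ht hx) _ (mul_mem_Icc_zero ht hy)
    _ = A * (t * |y - x|) + γ := by rw [← mul_sub, abs_mul, abs_of_nonneg ht.1]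
    _ ≤ A * |y - x| + γ := by gcongr; exact mul_le_of_le_one_left (abs_nonneg _) ht.2

theorem CoarseLipschitzOn.abs_sub_radialMean_le (h : CoarseLipschitzOn A γ φ (Icc 0 R))
    (hφ : ContinuousOn φ (Icc 0 R)) (hA : 0 ≤ A) (hr : r ∈ Icc 0 R) :
    |φ r - radialMean φ r| ≤ A * r + γ := by
  rw [← radialMean_const (φ r) r]
  refine abs_radialMean_sub_radialMean_le continuousOn_const
    (hφ.mono (Icc_subset_Icc_right hr.2)) hr.1 hr.1 fun t ht => ?_
  calc |φ r - φ (t * r)| ≤ A * |r - t * r| + γ := h _ (mul_mem_Icc_zero ht hr) _ hr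
    _ = A * ((1 - t) * r) + γ := by
        rw [← one_sub_mul, abs_of_nonneg (mul_nonneg (sub_nonneg.2 ht.2) hr.1)]
    _ ≤ A * r + γ := by gcongr; exact mul_le_of_le_one_left hr.1 (sub_le_self 1 ht.1)

theorem CoarseLipschitzOn.abs_sub_radialMean_sub_le (h : CoarseLipschitzOn A γ φ (Icc 0 R))
    (hφ : ContinuousOn φ (Icc 0 R)) (hA : 0 ≤ A) (ha : a ∈ Icc 0 R) (hb : b ∈ Icc 0 R) :
    |(φ b - radialMean φ b) - (φ a - radialMean φ a)| ≤ 2 * (A * |b - a| + γ) := by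
  rw [sub_sub_sub_comm, two_mul]
  exact (abs_sub _ _).trans (add_le_add (h a ha b hb) (h.radialMean hφ hA a ha b hb))

theorem CoarseLipschitzOn.nonneg {s : Set ℝ} (h : CoarseLipschitzOn A γ φ s) (ha : a ∈ s) :
    0 ≤ γ := by
  simpa using h a ha a ha

theorem abs_sub_map_zero_le_of_lipschitzOnWith (hφ : LipschitzOnWith L φ (Icc 0 R))
    (hr : r ∈ Icc 0 R) : |φ r - φ 0| ≤ L * r := by
  simpa [Real.dist_eq, abs_of_nonneg hr.1] using
    hφ.dist_le_mul r hr 0 ⟨le_rfl, hr.1.trans hr.2⟩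

theorem lipschitzOnWith_radialMean (hφ : LipschitzOnWith L φ (Icc 0 R)) :
    LipschitzOnWith L (radialMean φ) (Icc 0 R) :=
  coarseLipschitzOn_zero_iff.1
    ((coarseLipschitzOn_zero_iff.2 hφ).radialMean hφ.continuousOn L.coe_nonneg)

theorem abs_sub_radialMean_le_of_lipschitzOnWith (hφ : LipschitzOnWith L φ (Icc 0 R))
    (hr : r ∈ Icc 0 R) : |φ r - radialMean φ r| ≤ L * r := by
  simpa using (coarseLipschitzOn_zero_iff.2 hφ).abs_sub_radialMean_le hφ.continuousOn
    L.coe_nonneg hr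

theorem abs_sub_radialMean_div_le_of_lipschitzOnWith (hφ : LipschitzOnWith L φ (Icc 0 R))
    (hr : r ∈ Icc 0 R) : |(φ r - radialMean φ r) / (2 * r)| ≤ L / 2 := by
  have hr0 : 0 ≤ 2 * r := mul_nonneg zero_le_two hr.1
  rw [abs_div, abs_of_nonneg hr0]
  refine div_le_of_le_mul₀ hr0 (by positivity)
    ((abs_sub_radialMean_le_of_lipschitzOnWith hφ hr).trans_eq ?_)
  ring

theorem abs_radialMean_le_of_lipschitzOnWith (hφ : LipschitzOnWith L φ (Icc 0 R)) (hφ0 : φ 0 = 0)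
    (hr : r ∈ Icc 0 R) : |radialMean φ r| ≤ L * r := by
  simpa [hφ0] using abs_sub_map_zero_le_of_lipschitzOnWith (lipschitzOnWith_radialMean hφ) hr

/-- Comparing with the value at the endpoint `b` turns the difference of the moments
`r (ψ r - radialMean ψ r) = r ψ r - ∫₀ʳ ψ` into a sum of nonnegative terms. -/
theorem mul_sub_radialMean_le_of_isMaxOn (hψ : ContinuousOn ψ (Icc 0 b)) (ha : 0 ≤ a)
    (hab : a ≤ b) (hmax : IsMaxOn ψ (Icc a b) b) :
    a * (ψ a - radialMean ψ a) ≤ b * (ψ b - radialMean ψ b) := by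
  have hint {x y : ℝ} (hx : x ∈ Icc 0 b) (hy : y ∈ Icc 0 b) : IntervalIntegrable ψ volume x y :=
    (hψ.mono (ordConnected_Icc.uIcc_subset hx hy)).intervalIntegrable
  have h0 : (0 : ℝ) ∈ Icc 0 b := ⟨le_rfl, ha.trans hab⟩
  have hab' : IntervalIntegrable ψ volume a b := hint ⟨ha, hab⟩ ⟨h0.2, le_rfl⟩
  have hsplit : (∫ s in (0 : ℝ)..a, ψ s) + ∫ s in a..b, ψ s = ∫ s in (0 : ℝ)..b, ψ s :=
    integral_add_adjacent_intervals (hint h0 ⟨ha, hab⟩) hab'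
  have hupper : ∫ s in a..b, ψ s ≤ (b - a) * ψ b := by
    simpa using integral_mono_on hab hab' intervalIntegrable_const fun s hs => hmax hs
  have hend : a * ψ a ≤ a * ψ b := mul_le_mul_of_nonneg_left (hmax ⟨le_rfl, hab⟩) ha
  rw [mul_sub, mul_sub, mul_radialMean, mul_radialMean]
  linarith

end RadialMean

section MaximumPrinciple

variable {ψ : ℝ → ℝ} {R a b d F : ℝ}

theorem hasDerivWithinAt_mul_sub_nonpos_of_isMaxOn {s : Set ℝ} {x y : ℝ} (hs : Convex ℝ s)
    (hmax : IsMaxOn ψ s x) (hd : HasDerivWithinAt ψ d s x) (hx : x ∈ s) (hy : y ∈ s) :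
    d * (y - x) ≤ 0 := by
  have := hmax.localize.hasFDerivWithinAt_nonpos hd.hasFDerivWithinAt
    (sub_mem_posTangentConeAt_of_segment_subset (hs.segment_subset hx hy))
  simpa [mul_comm] using this

theorem mul_deriv_nonpos_of_isMaxOn_Icc (hmax : IsMaxOn ψ (Icc a R) b)
    (hd : HasDerivWithinAt ψ d (Icc a R) b) (hb : b ∈ Ioc a R) (hF : b = R → F ≤ 0) :
    F * d ≤ 0 := by
  have hvar {y : ℝ} (hy : y ∈ Icc a R) : d * (y - b) ≤ 0 :=
    hasDerivWithinAt_mul_sub_nonpos_of_isMaxOn (convex_Icc a R) hmax hd (Ioc_subset_Icc_self hb) hy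
  have hd0 : 0 ≤ d :=
    nonneg_of_mul_nonpos_left (hvar ⟨le_rfl, hb.1.le.trans hb.2⟩) (sub_neg.2 hb.1)
  rcases hb.2.eq_or_lt with hbR | hbR
  · exact mul_nonpos_of_nonpos_of_nonneg (hF hbR) hd0
  · have hd0' : d ≤ 0 :=
      nonpos_of_mul_nonpos_left (hvar ⟨hb.1.le.trans hb.2, le_rfl⟩) (sub_pos.2 hbR)
    rw [le_antisymm hd0' hd0, mul_zero]

theorem mul_deriv_nonneg_of_isMinOn_Icc (hmin : IsMinOn ψ (Icc 0 b) a)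
    (hd : HasDerivWithinAt ψ d (Icc 0 b) a) (ha : a ∈ Ico 0 b) (hF : a = 0 → 0 ≤ F) :
    0 ≤ F * d := by
  have hvar {y : ℝ} (hy : y ∈ Icc 0 b) : -d * (y - a) ≤ 0 :=
    hasDerivWithinAt_mul_sub_nonpos_of_isMaxOn (convex_Icc 0 b) hmin.neg hd.fun_neg
      (Ico_subset_Icc_self ha) hy
  have hd0 : 0 ≤ d := neg_nonpos.1 <|
    nonpos_of_mul_nonpos_left (hvar ⟨ha.1.trans ha.2.le, le_rfl⟩) (sub_pos.2 ha.2)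
  rcases ha.1.eq_or_lt with ha0 | ha0
  · exact mul_nonneg (hF ha0.symm) hd0
  · have hd0' : d ≤ 0 := neg_nonneg.1 <|
      nonneg_of_mul_nonpos_left (hvar ⟨le_rfl, ha.1.trans ha.2.le⟩) (sub_neg.2 ha0)
    rw [le_antisymm hd0' hd0, mul_zero]

theorem neg_of_strictly_decreasing_at_first_zero {X : Type*} [TopologicalSpace X] [T2Space X]
    {K : Set X} {Z : ℝ → X → ℝ} (hK : IsCompact K)
    (hcont : ContinuousOn (fun p : ℝ × X => Z p.1 p.2) (Ici 0 ×ˢ K)) (h0 : ∀ k ∈ K, Z 0 k < 0)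
    (hdec : ∀ u > 0, ∀ k ∈ K, (∀ l ∈ K, Z u l ≤ 0) → Z u k = 0 →
      ∃ d < 0, HasDerivWithinAt (fun s => Z s k) d (Ici 0) u)
    {u : ℝ} (hu : 0 ≤ u) {k : X} (hk : k ∈ K) : Z u k < 0 := by
  by_contra! hnonneg
  set S : Set (ℝ × X) := (Icc 0 u ×ˢ K) ∩ (fun p => Z p.1 p.2) ⁻¹' Ici 0
  have hS : IsCompact S := (isCompact_Icc.prod hK).of_isClosed_subset
    ((hcont.mono (prod_mono Icc_subset_Ici_self subset_rfl)).preimage_isClosed_of_isClosed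
      (isClosed_Icc.prod hK.isClosed) isClosed_Ici) inter_subset_left
  obtain ⟨⟨v, l⟩, ⟨⟨hvu, hl⟩, hvl⟩, hfirst⟩ :=
    hS.exists_isMinOn ⟨(u, k), ⟨⟨hu, le_rfl⟩, hk⟩, hnonneg⟩ continuousOn_fst
  have hbefore : ∀ s ∈ Ico 0 v, ∀ j ∈ K, Z s j < 0 := fun s hs j hj => by
    by_contra! hsj
    exact hs.2.not_ge (hfirst (a := (s, j)) ⟨⟨⟨hs.1, hs.2.le.trans hvu.2⟩, hj⟩, hsj⟩)
  have hv : 0 < v := hvu.1.lt_of_ne fun hv0 => (h0 l hl).not_ge (hv0 ▸ hvl)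
  have hat : ∀ j ∈ K, Z v j ≤ 0 := fun j hj => by
    have hcontj : ContinuousOn (fun s => Z s j) (Icc 0 v) :=
      hcont.comp (by fun_prop : ContinuousOn (fun s => (s, j)) _) fun s hs => ⟨hs.1, hj⟩
    rw [← closure_Ico hv.ne] at hcontj
    exact le_on_closure (fun s hs => (hbefore s hs j hj).le) hcontj continuousOn_const
      (closure_Ico hv.ne ▸ right_mem_Icc.2 hv.le)
  obtain ⟨d, hd, hderiv⟩ := hdec v hv l hl hat ((hat l hl).antisymm hvl)
  have hmax : IsMaxOn (fun s => Z s l) (Icc 0 v) v := isMaxOn_iff.2 fun s hs => by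
    rcases hs.2.eq_or_lt with rfl | hsv
    · exact le_rfl
    · exact (hbefore s ⟨hs.1, hsv⟩ l hl).le.trans hvl
  have := hasDerivWithinAt_mul_sub_nonpos_of_isMaxOn (convex_Icc 0 v) hmax
    (hderiv.mono Icc_subset_Ici_self) ⟨hv.le, le_rfl⟩ ⟨le_rfl, hv.le⟩
  rw [zero_sub, mul_neg, neg_nonpos] at this
  exact (mul_neg_of_neg_of_pos hd hv).not_ge this

end MaximumPrinciple

section MetricCoefficients

variable {f q g φ : ℝ → ℝ} {h : ℝ → ℝ → ℝ} {Λ κ R r u : ℝ} {K L N : ℝ≥0}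

/-- The integrand `(φ - φ̄)² / r` in the exponent of `metricF`. -/
def fluxDensity (φ : ℝ → ℝ) (r : ℝ) : ℝ :=
  (φ r - radialMean φ r) ^ 2 / r

theorem metricF_eq_exp (κ : ℝ) (h : ℝ → ℝ → ℝ) (u r : ℝ) :
    metricF κ h u r = exp (κ / 2 * ∫ s in (0 : ℝ)..r, fluxDensity (h u) s) := by
  simp only [metricF, fluxDensity, radAvg_eq_radialMean]

@[simp]
theorem metricF_zero (κ : ℝ) (h : ℝ → ℝ → ℝ) (u : ℝ) : metricF κ h u 0 = 1 := by
  simp [metricF]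

theorem abs_fluxDensity_le (hφ : LipschitzOnWith L φ (Icc 0 R)) (hr : r ∈ Icc 0 R) :
    |fluxDensity φ r| ≤ L ^ 2 * r := by
  rcases hr.1.eq_or_lt with rfl | hr0
  · simp [fluxDensity]
  rw [fluxDensity, abs_div, abs_of_pos hr0, div_le_iff₀ hr0, abs_pow]
  calc |φ r - radialMean φ r| ^ 2 ≤ (L * r) ^ 2 := by
        gcongr; exact abs_sub_radialMean_le_of_lipschitzOnWith hφ hr
    _ = L ^ 2 * r * r := by ring

theorem continuousOn_fluxDensity (hφ : LipschitzOnWith L φ (Icc 0 R)) :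
    ContinuousOn (fluxDensity φ) (Icc 0 R) := by
  intro r hr
  rcases hr.1.eq_or_lt with rfl | hr0
  · rw [ContinuousWithinAt, show fluxDensity φ 0 = 0 by simp [fluxDensity]]
    refine squeeze_zero_norm' (a := fun r => L ^ 2 * r)
      (eventually_mem_nhdsWithin.mono fun r hr => abs_fluxDensity_le hφ hr) ?_
    exact Filter.Tendsto.mono_left (by simpa using (continuous_const_mul (L ^ 2 : ℝ)).tendsto 0)
      nhdsWithin_le_nhds
  · have hcont := (hφ.continuousOn.sub (lipschitzOnWith_radialMean hφ).continuousOn).pow 2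
    exact (hcont r hr).div continuousWithinAt_id hr0.ne'

theorem continuousOn_metricF (hh : LipschitzOnWith L (h u) (Icc 0 R)) :
    ContinuousOn (metricF κ h u) (Icc 0 R) := by
  rcases lt_or_ge R 0 with hR | hR
  · simp [Icc_eq_empty hR.not_ge]
  have hint : IntegrableOn (fluxDensity (h u)) (uIcc 0 R) :=
    (uIcc_of_le hR ▸ continuousOn_fluxDensity hh).integrableOn_compact isCompact_uIcc
  have hprim := continuousOn_primitive_interval hint
  rw [uIcc_of_le hR] at hprim
  exact (hprim.const_mul (κ / 2)).rexp.congr fun r _ => metricF_eq_exp κ h u r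

theorem lipschitzOnWith_integral (hg : ContinuousOn g (Icc 0 R))
    (hK : ∀ r ∈ Icc 0 R, |g r| ≤ K) :
    LipschitzOnWith K (fun r => ∫ s in (0 : ℝ)..r, g s) (Icc 0 R) := by
  refine LipschitzOnWith.of_dist_le_mul fun a ha b hb => ?_
  have h0 : (0 : ℝ) ∈ Icc 0 R := ⟨le_rfl, ha.1.trans ha.2⟩
  have hint {x y : ℝ} (hx : x ∈ Icc 0 R) (hy : y ∈ Icc 0 R) : IntervalIntegrable g volume x y :=
    (hg.mono (ordConnected_Icc.uIcc_subset hx hy)).intervalIntegrable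
  have hK' : ∀ s ∈ uIoc b a, ‖g s‖ ≤ K := fun s hs =>
    hK s (ordConnected_Icc.uIcc_subset hb ha (uIoc_subset_uIcc hs))
  rw [Real.dist_eq, integral_interval_sub_left (hint h0 ha) (hint h0 hb), Real.dist_eq]
  exact norm_integral_le_of_norm_le_const hK'

theorem lipschitzOnWith_exp_Iic (M : ℝ) : LipschitzOnWith (exp M).toNNReal exp (Iic M) := by
  refine (convex_Iic M).lipschitzOnWith_of_nnnorm_deriv_le
    (fun _ _ => differentiableAt_exp) fun x hx => ?_
  rw [Real.deriv_exp, ← NNReal.coe_le_coe, coe_nnnorm, Real.coe_toNNReal _ (exp_pos M).le,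
    Real.norm_of_nonneg (exp_pos x).le]
  exact exp_le_exp.2 hx

theorem lipschitzOnWith_mul_of_zero (hf : LipschitzOnWith K f (Icc 0 R)) (hf0 : f 0 = 0)
    (hq : LipschitzOnWith L q (Icc 0 R)) (hqN : ∀ r ∈ Icc 0 R, |q r| ≤ N) :
    LipschitzOnWith (K * (N + L * R.toNNReal)) (fun r => f r * q r) (Icc 0 R) := by
  refine LipschitzOnWith.of_dist_le_mul fun x hx y hy => ?_
  have hR : 0 ≤ R := hx.1.trans hx.2
  have hfy : |f y| ≤ K * R := by
    rw [← sub_zero (f y), ← hf0]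
    exact (abs_sub_map_zero_le_of_lipschitzOnWith hf hy).trans (by gcongr; exact hy.2)
  have hfd := hf.dist_le_mul x hx y hy
  have hqd := hq.dist_le_mul x hx y hy
  rw [Real.dist_eq, Real.dist_eq] at hfd hqd ⊢
  calc |f x * q x - f y * q y| = |(f x - f y) * q x + f y * (q x - q y)| := by ring_nf
    _ ≤ |f x - f y| * |q x| + |f y| * |q x - q y| := by
        rw [← abs_mul, ← abs_mul]; exact abs_add_le _ _
    _ ≤ K * |x - y| * N + K * R * (L * |x - y|) := by gcongr; exact hqN x hx
    _ = ↑(K * (N + L * R.toNNReal)) * |x - y| := by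
        push_cast [Real.coe_toNNReal R hR]; ring

theorem exists_lipschitzOnWith_metricF (κ R : ℝ) : ∃ C : ℝ≥0, ∀ (h : ℝ → ℝ → ℝ) (u : ℝ) (L : ℝ≥0),
    L ≤ 1 → LipschitzOnWith L (h u) (Icc 0 R) →
      LipschitzOnWith (C * L ^ 2) (metricF κ h u) (Icc 0 R) := by
  set c : ℝ≥0 := ‖κ / 2‖₊ * R.toNNReal
  refine ⟨(exp (c * R)).toNNReal * c, fun h u L hL hh => ?_⟩
  have hflux : ∀ r ∈ Icc 0 R, |κ / 2 * fluxDensity (h u) r| ≤ ↑(c * L ^ 2) := fun r hr => by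
    rw [abs_mul, NNReal.coe_mul, NNReal.coe_mul, coe_nnnorm, Real.norm_eq_abs, mul_assoc,
      Real.coe_toNNReal R (hr.1.trans hr.2), NNReal.coe_pow, mul_comm R]
    gcongr
    exact (abs_fluxDensity_le hh hr).trans (by gcongr; exact hr.2)
  have hexponent := lipschitzOnWith_integral
    ((continuousOn_fluxDensity hh).const_smul (κ / 2)) hflux
  have hbound : MapsTo (fun r => ∫ s in (0 : ℝ)..r, κ / 2 * fluxDensity (h u) s) (Icc 0 R)
      (Iic (c * R)) := fun r hr => by
    have hexponent_le := abs_sub_map_zero_le_of_lipschitzOnWith hexponent hr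
    rw [integral_same, sub_zero] at hexponent_le
    refine (le_abs_self _).trans (hexponent_le.trans ?_)
    have hcL : c * L ^ 2 ≤ c := mul_le_of_le_one_right' (pow_le_one' hL 2)
    exact mul_le_mul (by exact_mod_cast hcL) hr.2 hr.1 c.coe_nonneg
  convert (lipschitzOnWith_exp_Iic _).comp hexponent hbound using 1
  · ring
  · ext r; simp [metricF_eq_exp]

/-- The weighted deviation `(f - 1)(1 - Λ r²)` of the metric coefficients from de Sitter: its radial
mean is the deviation of `f̃`. -/
def metricDefect (Λ κ : ℝ) (h : ℝ → ℝ → ℝ) (u r : ℝ) : ℝ :=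
  (metricF κ h u r - 1) * (1 - Λ * r ^ 2)

@[simp]
theorem metricDefect_zero (Λ κ : ℝ) (h : ℝ → ℝ → ℝ) (u : ℝ) : metricDefect Λ κ h u 0 = 0 := by
  simp [metricDefect]

theorem exists_lipschitzOnWith_metricDefect (Λ κ R : ℝ) :
    ∃ C : ℝ≥0, ∀ (h : ℝ → ℝ → ℝ) (u : ℝ) (L : ℝ≥0),
      L ≤ 1 → LipschitzOnWith L (h u) (Icc 0 R) →
        LipschitzOnWith (C * L ^ 2) (metricDefect Λ κ h u) (Icc 0 R) := by
  obtain ⟨C, hC⟩ := exists_lipschitzOnWith_metricF κ R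
  set q : ℝ → ℝ := fun r => 1 - Λ * r ^ 2
  obtain ⟨M, hM⟩ : ∃ M, LipschitzOnWith M q (Icc 0 R) :=
    (contDiff_const.sub (contDiff_const.mul (contDiff_id.pow 2)) : ContDiff ℝ 1 q)
      |>.contDiffOn.exists_lipschitzOnWith one_ne_zero (convex_Icc 0 R) isCompact_Icc
  obtain ⟨N, hN⟩ : ∃ N, ∀ r ∈ Icc 0 R, ‖q r‖ ≤ N :=
    isCompact_Icc.exists_bound_of_continuousOn hM.continuousOn
  refine ⟨C * (N.toNNReal + M * R.toNNReal), fun h u L hL hh => ?_⟩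
  have hf : LipschitzOnWith (C * L ^ 2) (fun r => metricF κ h u r - 1) (Icc 0 R) :=
    fun x hx y hy => by simpa only [edist_sub_right] using hC h u L hL hh hx hy
  have hdefect := lipschitzOnWith_mul_of_zero hf (by simp) hM
    fun r hr => (hN r hr).trans (le_coe_toNNReal N)
  rwa [mul_right_comm] at hdefect

theorem metricFt_eq (hf : ContinuousOn (metricF κ h u) (Icc 0 r)) (hr : 0 ≤ r) :
    metricFt Λ κ h u r = 1 - Λ / 3 * r ^ 2 + radialMean (metricDefect Λ κ h u) r := by
  rcases hr.eq_or_lt with rfl | hr0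
  · simp [metricFt]
  have hint {q : ℝ → ℝ} (hq : ContinuousOn q (Icc 0 r)) : IntervalIntegrable q volume 0 r :=
    hq.intervalIntegrable_of_Icc hr
  have hsq : ContinuousOn (fun s => metricF κ h u s * s ^ 2) (Icc 0 r) := hf.mul (by fun_prop)
  have hdefect : ∫ s in (0 : ℝ)..r, metricDefect Λ κ h u s =
      (∫ s in (0 : ℝ)..r, metricF κ h u s) - Λ * (∫ s in (0 : ℝ)..r, metricF κ h u s * s ^ 2)
        - (r - Λ * (r ^ 3 / 3)) := by
    calc ∫ s in (0 : ℝ)..r, metricDefect Λ κ h u s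
        = ∫ s in (0 : ℝ)..r, (metricF κ h u s - Λ * (metricF κ h u s * s ^ 2)
            - (1 - Λ * s ^ 2)) :=
          integral_congr fun s _ => by simp only [metricDefect]; ring
      _ = _ := by
          rw [intervalIntegral.integral_sub ((hint hf).sub ((hint hsq).const_mul Λ))
            (hint (by fun_prop)), intervalIntegral.integral_sub (hint hf) ((hint hsq).const_mul Λ),
            intervalIntegral.integral_sub (hint (by fun_prop)) (hint (by fun_prop))]
          simp only [intervalIntegral.integral_const_mul, integral_one, integral_pow]
          ring
  rw [← mul_right_inj' hr0.ne', mul_add, mul_radialMean, hdefect, metricFt, if_neg hr0.ne']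
  field_simp
  ring

theorem coefG_eq (hf : ContinuousOn (metricF κ h u) (Icc 0 r)) (hr : 0 < r) :
    coefG Λ κ h u r =
      (metricDefect Λ κ h u r - radialMean (metricDefect Λ κ h u) r) / (2 * r) - Λ / 3 * r := by
  rw [coefG, metricFt_eq hf hr.le, metricDefect]
  field_simp
  ring

end MetricCoefficients

section DecayPotential

variable {H R a b r : ℝ}

/-- The derivative of `decayPotential`: the slope `∂ᵣh` of a linear wave on de Sitter spacetime
that decays like `e^{-2Hu}`. -/
def decayWeight (H r : ℝ) : ℝ :=
  ((1 + H * r) ^ 4)⁻¹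

/-- The spatial profile of the barrier; up to additive constants it is an eigenfunction of the
linearised equation with eigenvalue `-2H`, see `bondiFlow_zero_decayPotential`. -/
def decayPotential (H r : ℝ) : ℝ :=
  -((1 + H * r) ^ 3)⁻¹ / (3 * H)

theorem decayWeight_pos (hH : 0 < H) (hr : 0 ≤ r) : 0 < decayWeight H r := by
  unfold decayWeight; positivity

theorem decayWeight_le_one (hH : 0 < H) (hr : 0 ≤ r) : decayWeight H r ≤ 1 :=
  inv_le_one_of_one_le₀ (one_le_pow₀ (le_add_of_nonneg_right (by positivity)))

theorem decayWeight_le_of_le (hH : 0 < H) (ha : 0 ≤ a) (hab : a ≤ b) :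
    decayWeight H b ≤ decayWeight H a := by
  unfold decayWeight; gcongr

theorem hasDerivAt_inv_one_add_mul_pow (n : ℕ) (hr : 1 + H * r ≠ 0) :
    HasDerivAt (fun s => ((1 + H * s) ^ n)⁻¹) (-(n * H * ((1 + H * r) ^ (n + 1))⁻¹)) r := by
  have haffine : HasDerivAt (fun s => 1 + H * s) H r := by
    simpa using ((hasDerivAt_id r).const_mul H).const_add 1
  refine ((haffine.fun_pow n).fun_inv (pow_ne_zero n hr)).congr_deriv ?_
  rcases n with _ | n
  · simp
  · rw [Nat.add_sub_cancel]
    field_simp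
    ring

theorem hasDerivAt_decayPotential (hH : 0 < H) (hr : 0 ≤ r) :
    HasDerivAt (decayPotential H) (decayWeight H r) r := by
  refine ((hasDerivAt_inv_one_add_mul_pow 3 (by positivity)).fun_neg.div_const
    (3 * H)).congr_deriv ?_
  rw [decayWeight, neg_neg, Nat.cast_ofNat, mul_div_cancel_left₀ _ (by positivity)]

theorem continuousOn_decayPotential (hH : 0 < H) : ContinuousOn (decayPotential H) (Icc 0 R) :=
  fun _ hr => (hasDerivAt_decayPotential hH hr.1).continuousAt.continuousWithinAt

theorem decayPotential_sub_mem_Icc (hH : 0 < H) (ha : 0 ≤ a) (hab : a ≤ b) (hbR : b ≤ R) :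
    decayPotential H b - decayPotential H a ∈ Icc (decayWeight H R * (b - a)) (b - a) := by
  have hderiv {r : ℝ} (hr : r ∈ interior (Icc a b)) :
      HasDerivAt (decayPotential H) (decayWeight H r) r :=
    hasDerivAt_decayPotential hH (ha.trans (interior_subset hr).1)
  have hcont : ContinuousOn (decayPotential H) (Icc a b) :=
    (continuousOn_decayPotential hH).mono (Icc_subset_Icc_left ha)
  have hdiff : DifferentiableOn ℝ (decayPotential H) (interior (Icc a b)) :=
    fun r hr => (hderiv hr).differentiableAt.differentiableWithinAt
  constructor
  · refine (convex_Icc a b).mul_sub_le_image_sub_of_le_deriv hcont hdiff (fun r hr => ?_)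
      a ⟨le_rfl, hab⟩ b ⟨hab, le_rfl⟩ hab
    rw [(hderiv hr).deriv]
    exact decayWeight_le_of_le hH (ha.trans (interior_subset hr).1)
      ((interior_subset hr).2.trans hbR)
  · rw [← one_mul (b - a)]
    refine (convex_Icc a b).image_sub_le_mul_sub_of_deriv_le hcont hdiff (fun r hr => ?_)
      a ⟨le_rfl, hab⟩ b ⟨hab, le_rfl⟩ hab
    rw [(hderiv hr).deriv]
    exact decayWeight_le_one hH (ha.trans (interior_subset hr).1)

theorem decayPotential_le_of_le (hH : 0 < H) (ha : 0 ≤ a) (hab : a ≤ b) :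
    decayPotential H a ≤ decayPotential H b := by
  rw [decayPotential, decayPotential]
  gcongr

theorem abs_decayPotential_sub_mem_Icc (hH : 0 < H) (ha : a ∈ Icc 0 R) (hb : b ∈ Icc 0 R) :
    |decayPotential H b - decayPotential H a| ∈ Icc (decayWeight H R * |b - a|) |b - a| := by
  wlog hab : a ≤ b generalizing a b
  · simpa only [abs_sub_comm] using this hb ha (le_of_not_ge hab)
  have hgap := decayPotential_sub_mem_Icc hH ha.1 hab hb.2
  rwa [abs_of_nonneg (sub_nonneg.2 (decayPotential_le_of_le hH ha.1 hab)),
    abs_of_nonneg (sub_nonneg.2 hab)]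

theorem lipschitzOnWith_decayWeight (hH : 0 < H) :
    LipschitzOnWith (4 * H).toNNReal (decayWeight H) (Icc 0 R) := by
  refine (convex_Icc 0 R).lipschitzOnWith_of_nnnorm_hasDerivWithin_le
    (fun r hr => (hasDerivAt_inv_one_add_mul_pow 4 ?_).hasDerivWithinAt) fun r hr => ?_
  · have := hr.1; positivity
  · have hx : 1 ≤ (1 + H * r) ^ 5 :=
      one_le_pow₀ (le_add_of_nonneg_right (mul_nonneg hH.le hr.1))
    rw [← NNReal.coe_le_coe, coe_nnnorm, norm_neg, Real.norm_of_nonneg (by positivity),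
      Real.coe_toNNReal _ (by positivity)]
    exact mul_le_of_le_one_right (by positivity) (inv_le_one_of_one_le₀ hx)

theorem mul_radialMean_decayPotential (hH : 0 < H) (hr : 0 ≤ r) :
    r * radialMean (decayPotential H) r = (((1 + H * r) ^ 2)⁻¹ - 1) / (6 * H ^ 2) := by
  have hprim : ∀ s ∈ uIcc 0 r, HasDerivAt (fun s => ((1 + H * s) ^ 2)⁻¹ / (6 * H ^ 2))
      (decayPotential H s) s := fun s hs => by
    rw [uIcc_of_le hr] at hs
    have hx : 1 + H * s ≠ 0 := by have := hs.1; positivity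
    refine ((hasDerivAt_inv_one_add_mul_pow 2 hx).div_const (6 * H ^ 2)).congr_deriv ?_
    rw [decayPotential, Nat.cast_ofNat]
    field_simp
    ring
  rw [mul_radialMean, integral_eq_sub_of_hasDerivAt hprim
    ((continuousOn_decayPotential hH).intervalIntegrable_of_Icc hr)]
  simp [sub_div]

end DecayPotential

section BondiFlow

variable {H R A γ a b r : ℝ} {L : ℝ≥0} {m φ p : ℝ → ℝ}

/-- The right-hand side of the reduced equation solved for `∂ᵤh`, at a fixed Bondi time: `φ` and `p`
stand for `h` and `∂ᵣh`, `m` for `metricDefect`, and `m = 0` is the linearisation at de Sitter. -/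
def bondiFlow (H : ℝ) (m φ p : ℝ → ℝ) (r : ℝ) : ℝ :=
  (1 - H ^ 2 * r ^ 2 + radialMean m r) / 2 * p r
    + ((m r - radialMean m r) / (2 * r) - H ^ 2 * r) * (φ r - radialMean φ r)

theorem bondiFlow_neg (H : ℝ) (m φ p : ℝ → ℝ) (r : ℝ) :
    bondiFlow H m (-φ) (-p) r = -bondiFlow H m φ p r := by
  simp only [bondiFlow, radialMean_neg, Pi.neg_apply]
  ring

theorem bondiFlow_zero_decayPotential (hH : 0 < H) (hr : 0 ≤ r) :
    bondiFlow H 0 (decayPotential H) (decayWeight H) r = -2 * H * decayPotential H r - 1 / 6 := by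
  have hx : 1 + H * r ≠ 0 := by positivity
  have hmean : radialMean 0 r = 0 := radialMean_const 0 r
  have hmoment := mul_radialMean_decayPotential hH hr
  calc bondiFlow H 0 (decayPotential H) (decayWeight H) r
      = (1 - H ^ 2 * r ^ 2) / 2 * decayWeight H r - H ^ 2 * r * decayPotential H r
          + H ^ 2 * (r * radialMean (decayPotential H) r) := by
        simp only [bondiFlow, hmean, Pi.zero_apply]; ring
    _ = -2 * H * decayPotential H r - 1 / 6 := by
        rw [hmoment, decayPotential, decayWeight]
        field_simp
        ring

/-- `φ` obeys the modulus of continuity `A |ρ y - ρ x| + γ` on `[0, R]`, where `ρ` is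
`decayPotential`: the two-point barrier at a fixed Bondi time. -/
def HasDecayModulus (H R A γ : ℝ) (φ : ℝ → ℝ) : Prop :=
  ∀ x ∈ Icc 0 R, ∀ y ∈ Icc 0 R,
    φ y - φ x ≤ A * |decayPotential H y - decayPotential H x| + γ

theorem HasDecayModulus.neg (h : HasDecayModulus H R A γ φ) : HasDecayModulus H R A γ (-φ) := by
  intro x hx y hy
  have := h y hy x hx
  rw [abs_sub_comm] at this
  simpa only [Pi.neg_apply, neg_sub_neg]

theorem HasDecayModulus.coarseLipschitzOn (h : HasDecayModulus H R A γ φ) (hH : 0 < H)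
    (hA : 0 ≤ A) : CoarseLipschitzOn A γ φ (Icc 0 R) := by
  have hle {x y : ℝ} (hx : x ∈ Icc 0 R) (hy : y ∈ Icc 0 R) : φ y - φ x ≤ A * |y - x| + γ :=
    (h x hx y hy).trans <| by
      have := mul_le_mul_of_nonneg_left (abs_decayPotential_sub_mem_Icc hH hx hy).2 hA
      gcongr
  intro x hx y hy
  refine abs_sub_le_iff.2 ⟨hle hx hy, ?_⟩
  rw [abs_sub_comm]
  exact hle hy hx

theorem HasDecayModulus.isMaxOn_of_eq (h : HasDecayModulus H R A γ φ) (hH : 0 < H)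
    (ha : 0 ≤ a) (hab : a ≤ b) (hb : b ≤ R)
    (heq : φ b - φ a = A * (decayPotential H b - decayPotential H a) + γ) :
    IsMaxOn (fun r => φ r - A * decayPotential H r) (Icc a R) b := by
  intro y hy
  have hgap := h a ⟨ha, hab.trans hb⟩ y ⟨ha.trans hy.1, hy.2⟩
  rw [abs_of_nonneg (sub_nonneg.2 (decayPotential_le_of_le hH ha hy.1))] at hgap
  rw [mem_ofPred_eq]
  linarith

theorem HasDecayModulus.isMinOn_of_eq (h : HasDecayModulus H R A γ φ) (hH : 0 < H)
    (ha : 0 ≤ a) (hab : a ≤ b) (hb : b ≤ R)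
    (heq : φ b - φ a = A * (decayPotential H b - decayPotential H a) + γ) :
    IsMinOn (fun r => φ r - A * decayPotential H r) (Icc 0 b) a := by
  intro x hx
  have hgap := h x ⟨hx.1, hx.2.trans hb⟩ b ⟨ha.trans hab, hb⟩
  rw [abs_of_nonneg (sub_nonneg.2 (decayPotential_le_of_le hH hx.1 hx.2))] at hgap
  rw [mem_ofPred_eq]
  linarith

theorem transport_sub_le_of_touching {F : ℝ → ℝ} (hH : 0 < H)
    (hp : ∀ r ∈ Icc 0 R, HasDerivWithinAt φ (p r) (Icc 0 R) r) (ha : 0 ≤ a) (hab : a < b)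
    (hb : b ≤ R) (hmod : HasDecayModulus H R A γ φ)
    (heq : φ b - φ a = A * (decayPotential H b - decayPotential H a) + γ)
    (hF0 : 0 ≤ F 0) (hFR : F R ≤ 0) :
    F b * p b - F a * p a ≤ A * (F b * decayWeight H b - F a * decayWeight H a) := by
  have hderiv {r : ℝ} (hr : r ∈ Icc 0 R) : HasDerivWithinAt (fun r => φ r - A * decayPotential H r)
      (p r - A * decayWeight H r) (Icc 0 R) r :=
    (hp r hr).fun_sub ((hasDerivAt_decayPotential hH hr.1).const_mul A).hasDerivWithinAt
  have hb' : F b * (p b - A * decayWeight H b) ≤ 0 :=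
    mul_deriv_nonpos_of_isMaxOn_Icc (hmod.isMaxOn_of_eq hH ha hab.le hb heq)
      ((hderiv ⟨ha.trans hab.le, hb⟩).mono (Icc_subset_Icc_left ha)) ⟨hab, hb⟩ fun h => h ▸ hFR
  have ha' : 0 ≤ F a * (p a - A * decayWeight H a) :=
    mul_deriv_nonneg_of_isMinOn_Icc (hmod.isMinOn_of_eq hH ha hab.le hb heq)
      ((hderiv ⟨ha, hab.le.trans hb⟩).mono (Icc_subset_Icc_right hb)) ⟨ha, hab⟩ fun h => h ▸ hF0
  linarith

theorem moment_sub_le_of_touching (hH : 0 < H) (hφ : ContinuousOn φ (Icc 0 R)) (ha : 0 ≤ a)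
    (hab : a ≤ b) (hb : b ≤ R) (hmod : HasDecayModulus H R A γ φ)
    (heq : φ b - φ a = A * (decayPotential H b - decayPotential H a) + γ) :
    A * (b * (decayPotential H b - radialMean (decayPotential H) b)
        - a * (decayPotential H a - radialMean (decayPotential H) a))
      ≤ b * (φ b - radialMean φ b) - a * (φ a - radialMean φ a) := by
  have hρ : ContinuousOn (fun r => A * decayPotential H r) (Icc 0 R) :=
    (continuousOn_decayPotential hH).const_mul A
  have hmean {r : ℝ} (hr : r ∈ Icc 0 R) : radialMean (φ - fun r => A * decayPotential H r) r
      = radialMean φ r - A * radialMean (decayPotential H) r := by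
    rw [radialMean_sub (hφ.mono (Icc_subset_Icc_right hr.2)) (hρ.mono (Icc_subset_Icc_right hr.2))
      hr.1, radialMean_const_mul]
  have hmoment := mul_sub_radialMean_le_of_isMaxOn
    ((hφ.sub hρ).mono (Icc_subset_Icc_right hb)) ha hab
    ((hmod.isMaxOn_of_eq hH ha hab hb heq).on_subset (Icc_subset_Icc_right hb))
  rw [hmean ⟨ha, hab.trans hb⟩, hmean ⟨ha.trans hab, hb⟩, Pi.sub_apply, Pi.sub_apply] at hmoment
  linarith

theorem mul_abs_div_sub_div_le {μ : ℝ → ℝ} {L : ℝ} (ha : 0 ≤ a) (hab : a < b)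
    (hμ : |μ b| ≤ L * b) (hΔ : |μ b - μ a| ≤ 2 * L * (b - a)) :
    a * |μ b / (2 * b) - μ a / (2 * a)| ≤ 3 / 2 * L * (b - a) := by
  have hb : 0 < b := ha.trans_lt hab
  have hbΔ : |(b - a) / b * μ b| ≤ (b - a) / b * (L * b) := by
    rw [abs_mul, abs_of_nonneg (div_nonneg (sub_nonneg.2 hab.le) hb.le)]
    exact mul_le_mul_of_nonneg_left hμ (div_nonneg (sub_nonneg.2 hab.le) hb.le)
  rcases ha.eq_or_lt with rfl | ha0
  · have := (abs_nonneg _).trans hμ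
    rw [zero_mul, sub_zero]
    linarith
  calc a * |μ b / (2 * b) - μ a / (2 * a)|
      = |(μ b - μ a) - (b - a) / b * μ b| / 2 := by
        rw [← abs_of_pos ha0, ← abs_mul, abs_of_pos ha0, ← abs_two, ← abs_div, abs_two]
        congr 1
        field_simp
        ring
    _ ≤ (2 * L * (b - a) + (b - a) / b * (L * b)) / 2 := by
        gcongr
        exact (abs_sub _ _).trans (add_le_add hΔ hbΔ)
    _ = 3 / 2 * L * (b - a) := by field_simp; ring

theorem abs_source_sub_le (hm : LipschitzOnWith L m (Icc 0 R))
    (hφ : CoarseLipschitzOn A γ φ (Icc 0 R)) (hcont : ContinuousOn φ (Icc 0 R)) (hA : 0 ≤ A)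
    (ha : 0 ≤ a) (hab : a < b) (hb : b ≤ R) :
    |(m b - radialMean m b) / (2 * b) * (φ b - radialMean φ b)
        - (m a - radialMean m a) / (2 * a) * (φ a - radialMean φ a)|
      ≤ 5 / 2 * L * A * (b - a) + 2 * L * γ := by
  set μ : ℝ → ℝ := fun r => m r - radialMean m r
  set δ : ℝ → ℝ := fun r => φ r - radialMean φ r
  have haR : a ∈ Icc 0 R := ⟨ha, hab.le.trans hb⟩
  have hbR : b ∈ Icc 0 R := ⟨ha.trans hab.le, hb⟩
  have hΔ : |b - a| = b - a := abs_of_pos (sub_pos.2 hab)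
  have hmLip := coarseLipschitzOn_zero_iff.2 hm
  have hμ {r : ℝ} (hr : r ∈ Icc 0 R) : |μ r| ≤ L * r :=
    abs_sub_radialMean_le_of_lipschitzOnWith hm hr
  have hμΔ := hmLip.abs_sub_radialMean_sub_le hm.continuousOn L.coe_nonneg haR hbR
  have hδΔ := hφ.abs_sub_radialMean_sub_le hcont hA haR hbR
  have hδ : |δ a| ≤ A * a + γ := hφ.abs_sub_radialMean_le hcont hA haR
  have hslope {r : ℝ} (hr : r ∈ Icc 0 R) : |μ r / (2 * r)| ≤ L / 2 :=
    abs_sub_radialMean_div_le_of_lipschitzOnWith hm hr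
  have hslopeΔ := mul_abs_div_sub_div_le ha hab (hμ hbR) (by
    simpa only [hΔ, mul_assoc, add_zero] using hμΔ)
  have hγ : 0 ≤ γ := hφ.nonneg haR
  calc |μ b / (2 * b) * δ b - μ a / (2 * a) * δ a|
      = |μ b / (2 * b) * (δ b - δ a) + (μ b / (2 * b) - μ a / (2 * a)) * δ a| := by ring_nf
    _ ≤ |μ b / (2 * b)| * |δ b - δ a| + |μ b / (2 * b) - μ a / (2 * a)| * |δ a| := by
        rw [← abs_mul, ← abs_mul]; exact abs_add_le _ _
    _ ≤ L / 2 * (2 * (A * (b - a) + γ)) + |μ b / (2 * b) - μ a / (2 * a)| * (A * a + γ) := by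
        gcongr
        · exact hslope hbR
        · simpa only [hΔ] using hδΔ
    _ = L * A * (b - a) + L * γ + A * (a * |μ b / (2 * b) - μ a / (2 * a)|)
          + |μ b / (2 * b) - μ a / (2 * a)| * γ := by ring
    _ ≤ L * A * (b - a) + L * γ + A * (3 / 2 * L * (b - a)) + (L / 2 + L / 2) * γ := by
        gcongr
        exact (abs_sub _ _).trans (add_le_add (hslope hbR) (hslope haR))
    _ = 5 / 2 * L * A * (b - a) + 2 * L * γ := by ring

theorem abs_radialMean_mul_decayWeight_sub_le (hH : 0 < H) (hm : LipschitzOnWith L m (Icc 0 R))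
    (hm0 : m 0 = 0) (ha : a ∈ Icc 0 R) (hb : b ∈ Icc 0 R) :
    |radialMean m b * decayWeight H b - radialMean m a * decayWeight H a|
      ≤ L * (1 + 4 * H * R) * |b - a| := by
  have hw : ∀ r ∈ Icc 0 R, |decayWeight H r| ≤ (1 : ℝ≥0) := fun r hr => by
    rw [abs_of_pos (decayWeight_pos hH hr.1)]
    exact decayWeight_le_one hH hr.1
  have hmean0 : radialMean m 0 = 0 := by rw [radialMean_zero, hm0]
  have := (lipschitzOnWith_mul_of_zero (lipschitzOnWith_radialMean hm) hmean0
    (lipschitzOnWith_decayWeight hH) hw).dist_le_mul b hb a ha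
  rw [Real.dist_eq, Real.dist_eq] at this
  push_cast [Real.coe_toNNReal R (ha.1.trans ha.2), Real.coe_toNNReal (4 * H) (by positivity)]
    at this
  exact this

/-- Touching the modulus makes `φ - A ρ` maximal at `b` and minimal at `a`, which compares the
linear part with the eigenfunction `ρ`; only the terms containing `m` leave an error. -/
theorem bondiFlow_sub_le_of_touching (hH : 0 < H)
    (hp : ∀ r ∈ Icc 0 R, HasDerivWithinAt φ (p r) (Icc 0 R) r)
    (hm : LipschitzOnWith L m (Icc 0 R)) (hm0 : m 0 = 0)
    (hout : 1 - H ^ 2 * R ^ 2 + radialMean m R ≤ 0) (hA : 0 ≤ A) (ha : 0 ≤ a) (hab : a < b)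
    (hb : b ≤ R) (hmod : HasDecayModulus H R A γ φ)
    (heq : φ b - φ a = A * (decayPotential H b - decayPotential H a) + γ) :
    bondiFlow H m φ p b - bondiFlow H m φ p a
      ≤ -2 * H * A * (decayPotential H b - decayPotential H a)
        + L * A * (2 * H * R + 3) * (b - a) + 2 * L * γ := by
  have hcont : ContinuousOn φ (Icc 0 R) := fun r hr => (hp r hr).continuousWithinAt
  have htransport := transport_sub_le_of_touching
    (F := fun r => 1 - H ^ 2 * r ^ 2 + radialMean m r) hH hp ha hab hb hmod heq (by simp [hm0]) hout
  have hmoment := mul_le_mul_of_nonneg_left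
    (moment_sub_le_of_touching hH hcont ha hab.le hb hmod heq) (sq_nonneg H)
  have hsource := (le_abs_self _).trans <|
    abs_source_sub_le hm (hmod.coarseLipschitzOn hH hA) hcont hA ha hab hb
  have hweight := mul_le_mul_of_nonneg_left ((le_abs_self _).trans <|
    abs_radialMean_mul_decayWeight_sub_le hH hm hm0 ⟨ha, hab.le.trans hb⟩ ⟨ha.trans hab.le, hb⟩) hA
  rw [abs_of_pos (sub_pos.2 hab)] at hweight
  have hcompare : bondiFlow H m φ p b - bondiFlow H m φ p a
      ≤ A * (bondiFlow H 0 (decayPotential H) (decayWeight H) b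
          - bondiFlow H 0 (decayPotential H) (decayWeight H) a)
        + L * A * (2 * H * R + 3) * (b - a) + 2 * L * γ := by
    have hmean (r : ℝ) : radialMean 0 r = 0 := radialMean_const 0 r
    simp only [bondiFlow, hmean, Pi.zero_apply, sub_zero, zero_div]
    linarith
  rw [bondiFlow_zero_decayPotential hH ha, bondiFlow_zero_decayPotential hH (ha.trans hab.le)]
    at hcompare
  linarith

theorem bondiFlow_sub_le_neg_mul_of_touching (hH : 0 < H)
    (hp : ∀ r ∈ Icc 0 R, HasDerivWithinAt φ (p r) (Icc 0 R) r)
    (hm : LipschitzOnWith L m (Icc 0 R)) (hm0 : m 0 = 0)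
    (hout : 1 - H ^ 2 * R ^ 2 + radialMean m R ≤ 0)
    (hL : L * (2 * H * R + 3) ≤ H * decayWeight H R) (hA : 0 ≤ A) (ha : a ∈ Icc 0 R)
    (hb : b ∈ Icc 0 R) (hab : a ≠ b) (hmod : HasDecayModulus H R A γ φ)
    (heq : φ b - φ a = A * |decayPotential H b - decayPotential H a| + γ) :
    bondiFlow H m φ p b - bondiFlow H m φ p a
      ≤ -H * A * |decayPotential H b - decayPotential H a| + 2 * L * γ := by
  wlog hlt : a < b generalizing a b φ p
  · have hneg := this (φ := -φ) (p := -p) (fun r hr => (hp r hr).neg) hb ha hab.symm hmod.neg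
      (by rw [abs_sub_comm, ← heq]; simp only [Pi.neg_apply, neg_sub_neg])
      (lt_of_le_of_ne (not_lt.1 hlt) hab.symm)
    rw [bondiFlow_neg, bondiFlow_neg, neg_sub_neg] at hneg
    rwa [abs_sub_comm]
  have hgap := abs_decayPotential_sub_mem_Icc hH ha hb
  rw [abs_of_nonneg (sub_nonneg.2 (decayPotential_le_of_le hH ha.1 hlt.le))] at heq hgap ⊢
  rw [abs_of_pos (sub_pos.2 hlt)] at hgap
  have herror : L * A * (2 * H * R + 3) * (b - a)
      ≤ H * A * (decayPotential H b - decayPotential H a) :=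
    calc L * A * (2 * H * R + 3) * (b - a) = A * (L * (2 * H * R + 3)) * (b - a) := by ring
      _ ≤ A * (H * decayWeight H R) * (b - a) := by
          gcongr
      _ = H * A * (decayWeight H R * (b - a)) := by ring
      _ ≤ H * A * (decayPotential H b - decayPotential H a) := by gcongr; exact hgap.1
  have := bondiFlow_sub_le_of_touching hH hp hm hm0 hout hA ha.1 hlt hb.2 hmod heq
  linarith

theorem continuousOn_bondiFlow {K : ℝ≥0} (hm : LipschitzOnWith L m (Icc 0 R))
    (hφ : LipschitzOnWith K φ (Icc 0 R)) (hp : ContinuousOn p (Icc 0 R)) :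
    ContinuousOn (bondiFlow H m φ p) (Icc 0 R) := by
  have hδ : ContinuousOn (fun r => φ r - radialMean φ r) (Icc 0 R) :=
    hφ.continuousOn.sub (lipschitzOnWith_radialMean hφ).continuousOn
  have hmean : ContinuousOn (radialMean m) (Icc 0 R) := (lipschitzOnWith_radialMean hm).continuousOn
  have hsource : ContinuousOn
      (fun r => (m r - radialMean m r) / (2 * r) * (φ r - radialMean φ r)) (Icc 0 R) := by
    intro r hr
    rcases hr.1.eq_or_lt with rfl | hr0
    · have hδ0 : Filter.Tendsto (fun r => φ r - radialMean φ r) (𝓝[Icc 0 R] 0) (𝓝 0) := by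
        simpa [ContinuousWithinAt] using hδ 0 hr
      rw [ContinuousWithinAt, radialMean_zero, radialMean_zero, sub_self, sub_self, mul_zero]
      refine bdd_le_mul_tendsto_zero' (L / 2) ?_ hδ0
      exact eventually_mem_nhdsWithin.mono fun r hr =>
        abs_sub_radialMean_div_le_of_lipschitzOnWith hm hr
    · exact ((((hm.continuousOn.sub hmean) r hr).div (by fun_prop) (by positivity)).mul (hδ r hr))
  have hlinear : ContinuousOn (fun r => (1 - H ^ 2 * r ^ 2 + radialMean m r) / 2 * p r
      - H ^ 2 * r * (φ r - radialMean φ r)) (Icc 0 R) := by fun_prop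
  refine (hlinear.fun_add hsource).congr fun r _ => ?_
  simp only [bondiFlow]
  ring

end BondiFlow

section Evolution

variable {H R A γ u : ℝ} {K L : ℝ≥0} {m h p : ℝ → ℝ → ℝ}

/-- `h` evolves by `bondiFlow` on `[0, ∞) × [0, R]`, with radial derivative `p` and with metric
defects `m u` that are uniformly `L`-Lipschitz in the radius. -/
structure IsBondiEvolution (H R : ℝ) (L : ℝ≥0) (m h p : ℝ → ℝ → ℝ) : Prop where
  continuousOn : ContinuousOn (fun q : ℝ × ℝ => h q.1 q.2) (Ici 0 ×ˢ Icc 0 R)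
  hasDerivWithinAt_radius : ∀ u ∈ Ici (0 : ℝ), ∀ r ∈ Icc 0 R,
    HasDerivWithinAt (h u) (p u r) (Icc 0 R) r
  hasDerivWithinAt_time : ∀ u ∈ Ici (0 : ℝ), ∀ r ∈ Icc 0 R,
    HasDerivWithinAt (fun s => h s r) (bondiFlow H (m u) (h u) (p u) r) (Ici 0) u
  lipschitzOnWith_defect : ∀ u ∈ Ici (0 : ℝ), LipschitzOnWith L (m u) (Icc 0 R)
  defect_zero : ∀ u ∈ Ici (0 : ℝ), m u 0 = 0

theorem HasDecayModulus.lipschitzOnWith {φ : ℝ → ℝ} (hmod : HasDecayModulus H R K 0 φ)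
    (hH : 0 < H) : LipschitzOnWith K φ (Icc 0 R) :=
  coarseLipschitzOn_zero_iff.1 (hmod.coarseLipschitzOn hH K.coe_nonneg)

theorem hasDecayModulus_of_lipschitzOnWith {φ : ℝ → ℝ} (hφ : LipschitzOnWith K φ (Icc 0 R))
    (hH : 0 < H) : HasDecayModulus H R (K / decayWeight H R) 0 φ := by
  intro x hx y hy
  rw [add_zero, div_mul_eq_mul_div, le_div_iff₀ (decayWeight_pos hH (hx.1.trans hx.2))]
  calc (φ y - φ x) * decayWeight H R ≤ K * |y - x| * decayWeight H R := by
        have := (decayWeight_pos hH (hx.1.trans hx.2)).le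
        gcongr
        exact (le_abs_self _).trans (hφ.dist_le_mul y hy x hx)
    _ = K * (decayWeight H R * |y - x|) := by ring
    _ ≤ K * |decayPotential H y - decayPotential H x| := by
        gcongr; exact (abs_decayPotential_sub_mem_Icc hH hx hy).1

theorem HasDecayModulus.of_forall_pos {φ : ℝ → ℝ}
    (h : ∀ γ > 0, HasDecayModulus H R A γ φ) : HasDecayModulus H R A 0 φ := fun x hx y hy => by
  rw [add_zero]
  exact le_of_forall_pos_le_add fun γ hγ => h γ hγ x hx y hy

/-- The two-point function `h(u,b) - h(u,a)` minus its barrier. The summand `γ e^{(2L+1)u}` keeps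
the diagonal strictly below the barrier and outgrows the errors of the nonlinear terms. -/
def barrierGap (H A γ : ℝ) (L : ℝ≥0) (h : ℝ → ℝ → ℝ) (u : ℝ) (k : ℝ × ℝ) : ℝ :=
  h u k.2 - h u k.1 - (A * exp (-H * u) * |decayPotential H k.2 - decayPotential H k.1|
    + γ * exp ((2 * L + 1) * u))

theorem IsBondiEvolution.continuousOn_barrierGap (hev : IsBondiEvolution H R L m h p)
    (hH : 0 < H) : ContinuousOn (fun q : ℝ × ℝ × ℝ => barrierGap H A γ L h q.1 q.2)
      (Ici 0 ×ˢ Icc 0 R ×ˢ Icc 0 R) := by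
  have hρ := continuousOn_decayPotential (R := R) hH
  have hh₁ : ContinuousOn (fun q : ℝ × ℝ × ℝ => h q.1 q.2.1) (Ici 0 ×ˢ Icc 0 R ×ˢ Icc 0 R) :=
    hev.continuousOn.comp (f := fun q : ℝ × ℝ × ℝ => (q.1, q.2.1)) (by fun_prop)
      fun q hq => ⟨hq.1, hq.2.1⟩
  have hh₂ : ContinuousOn (fun q : ℝ × ℝ × ℝ => h q.1 q.2.2) (Ici 0 ×ˢ Icc 0 R ×ˢ Icc 0 R) :=
    hev.continuousOn.comp (f := fun q : ℝ × ℝ × ℝ => (q.1, q.2.2)) (by fun_prop)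
      fun q hq => ⟨hq.1, hq.2.2⟩
  have hρ₁ : ContinuousOn (fun q : ℝ × ℝ × ℝ => decayPotential H q.2.1)
      (Ici 0 ×ˢ Icc 0 R ×ˢ Icc 0 R) := hρ.comp (by fun_prop) fun q hq => hq.2.1
  have hρ₂ : ContinuousOn (fun q : ℝ × ℝ × ℝ => decayPotential H q.2.2)
      (Ici 0 ×ˢ Icc 0 R ×ˢ Icc 0 R) := hρ.comp (by fun_prop) fun q hq => hq.2.2
  exact (hh₂.sub hh₁).sub
    (((by fun_prop : ContinuousOn (fun q : ℝ × ℝ × ℝ => A * exp (-H * q.1)) _).mul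
      (hρ₂.sub hρ₁).abs).add (by fun_prop))

theorem IsBondiEvolution.exists_neg_hasDerivWithinAt_barrierGap
    (hev : IsBondiEvolution H R L m h p) (hH : 0 < H) (hout : 1 - H ^ 2 * R ^ 2 + L * R ≤ 0)
    (hL : L * (2 * H * R + 3) ≤ H * decayWeight H R) (hA : 0 ≤ A) (hγ : 0 < γ) (hu : u ∈ Ici 0)
    {k : ℝ × ℝ} (hk : k ∈ Icc 0 R ×ˢ Icc 0 R)
    (hle : ∀ l ∈ Icc 0 R ×ˢ Icc 0 R, barrierGap H A γ L h u l ≤ 0)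
    (heq : barrierGap H A γ L h u k = 0) :
    ∃ d < 0, HasDerivWithinAt (fun s => barrierGap H A γ L h s k) d (Ici 0) u := by
  obtain ⟨a, b⟩ := k
  have hγu : 0 < γ * exp ((2 * L + 1) * u) := by positivity
  have hne : a ≠ b := by
    rintro rfl
    simp only [barrierGap, sub_self, abs_zero, mul_zero, zero_add, zero_sub] at heq
    linarith
  have houter : 1 - H ^ 2 * R ^ 2 + radialMean (m u) R ≤ 0 := by
    have := abs_radialMean_le_of_lipschitzOnWith (hev.lipschitzOnWith_defect u hu)
      (hev.defect_zero u hu) (right_mem_Icc.2 (hk.1.1.trans hk.1.2))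
    linarith [le_abs_self (radialMean (m u) R)]
  have hflow := bondiFlow_sub_le_neg_mul_of_touching hH (hev.hasDerivWithinAt_radius u hu)
    (hev.lipschitzOnWith_defect u hu) (hev.defect_zero u hu) houter hL
    (mul_nonneg hA (exp_pos (-H * u)).le) hk.1 hk.2 hne
    (fun x hx y hy => sub_nonpos.1 (hle (x, y) ⟨hx, hy⟩)) (sub_eq_zero.1 heq)
  have hexp (c : ℝ) : HasDerivWithinAt (fun s => exp (c * s)) (c * exp (c * u)) (Ici 0) u := by
    simpa [mul_comm] using ((hasDerivAt_id u).const_mul c).exp.hasDerivWithinAt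
  refine ⟨_, ?_, ((hev.hasDerivWithinAt_time u hu b hk.2).fun_sub
    (hev.hasDerivWithinAt_time u hu a hk.1)).fun_sub
      ((((hexp (-H)).const_mul A).mul_const _).fun_add ((hexp (2 * L + 1)).const_mul γ))⟩
  linarith

theorem IsBondiEvolution.hasDecayModulus_exp (hev : IsBondiEvolution H R L m h p) (hH : 0 < H)
    (hout : 1 - H ^ 2 * R ^ 2 + L * R ≤ 0) (hL : L * (2 * H * R + 3) ≤ H * decayWeight H R)
    (hA : 0 ≤ A) (h0 : HasDecayModulus H R A 0 (h 0)) (hu : u ∈ Ici 0) :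
    HasDecayModulus H R (A * exp (-H * u)) 0 (h u) := by
  have hgap {γ : ℝ} (hγ : 0 < γ) {k : ℝ × ℝ} (hk : k ∈ Icc 0 R ×ˢ Icc 0 R) :
      barrierGap H A γ L h u k < 0 := by
    refine neg_of_strictly_decreasing_at_first_zero (isCompact_Icc.prod isCompact_Icc)
      (hev.continuousOn_barrierGap hH) (fun k hk => ?_) (fun s hs k hk hle heq => ?_) hu hk
    · have := h0 k.1 hk.1 k.2 hk.2
      simp only [barrierGap, mul_zero, exp_zero, mul_one]
      linarith
    · exact hev.exists_neg_hasDerivWithinAt_barrierGap hH hout hL hA hγ hs.le hk hle heq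
  refine .of_forall_pos fun γ hγ x hx y hy => ?_
  have hlt := hgap (γ := γ / exp ((2 * L + 1) * u)) (by positivity) (k := (x, y)) ⟨hx, hy⟩
  rw [barrierGap, div_mul_cancel₀ _ (exp_ne_zero _)] at hlt
  exact (sub_neg.1 hlt).le

theorem IsBondiEvolution.lipschitzOnWith_exp (hev : IsBondiEvolution H R L m h p) (hH : 0 < H)
    (hout : 1 - H ^ 2 * R ^ 2 + L * R ≤ 0) (hL : L * (2 * H * R + 3) ≤ H * decayWeight H R)
    (h0 : LipschitzOnWith K (h 0) (Icc 0 R)) (hR : 0 ≤ R) (hu : u ∈ Ici 0) :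
    LipschitzOnWith (K / decayWeight H R * exp (-H * u)).toNNReal (h u) (Icc 0 R) := by
  have hA : 0 ≤ K / decayWeight H R := div_nonneg K.coe_nonneg (decayWeight_pos hH hR).le
  have hmod := hev.hasDecayModulus_exp hH hout hL hA (hasDecayModulus_of_lipschitzOnWith h0 hH) hu
  rw [← Real.coe_toNNReal _ (mul_nonneg hA (exp_pos _).le)] at hmod
  exact hmod.lipschitzOnWith hH

end Evolution

section Solutions

variable {Λ κ H R u : ℝ} {K L : ℝ≥0} {h : ℝ → ℝ → ℝ}

theorem IsC1Solution.lipschitzOnWith (hsol : IsC1Solution Λ κ R h) (hu : u ∈ Ici 0)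
    (hK : ∀ r ∈ Icc 0 R, |pdR R h u r| ≤ K) : LipschitzOnWith K (h u) (Icc 0 R) :=
  (convex_Icc 0 R).lipschitzOnWith_of_nnnorm_hasDerivWithin_le
    (fun r hr => (hsol.2.1 u hu r hr).2.hasDerivWithinAt) hK

/-- For `r > 0` this is the equation itself; both sides are continuous up to the centre. -/
theorem IsC1Solution.pdU_eq_bondiFlow (hsol : IsC1Solution Λ κ R h) (hR : 0 < R)
    (hH : H ^ 2 = Λ / 3) (hu : u ∈ Ici 0) (hh : LipschitzOnWith K (h u) (Icc 0 R))
    (hm : LipschitzOnWith L (metricDefect Λ κ h u) (Icc 0 R)) :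
    EqOn (pdU h u) (bondiFlow H (metricDefect Λ κ h u) (h u) (pdR R h u)) (Icc 0 R) := by
  obtain ⟨-, -, hpdU, hpdR, heq⟩ := hsol
  have hslice : MapsTo (Prod.mk u) (Icc 0 R) (Ici 0 ×ˢ Icc 0 R) := fun r hr => ⟨hu, hr⟩
  have hpdU' : ContinuousOn (pdU h u) (Icc 0 R) := hpdU.comp (by fun_prop) hslice
  have hpdR' : ContinuousOn (pdR R h u) (Icc 0 R) := hpdR.comp (by fun_prop) hslice
  refine EqOn.of_subset_closure (fun r hr => ?_) hpdU' (continuousOn_bondiFlow hm hh hpdR')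
    Ioc_subset_Icc_self (closure_Ioc hR.ne).ge
  have hf : ContinuousOn (metricF κ h u) (Icc 0 r) :=
    (continuousOn_metricF hh).mono (Icc_subset_Icc_right hr.2)
  have hD := heq u hu r hr
  rw [metricFt_eq hf hr.1.le, coefG_eq hf hr.1, radAvg_eq_radialMean] at hD
  rw [bondiFlow, hH]
  linarith

theorem IsC1Solution.isBondiEvolution (hsol : IsC1Solution Λ κ R h) (hR : 0 < R)
    (hH : H ^ 2 = Λ / 3) (hh : ∀ u ∈ Ici (0 : ℝ), LipschitzOnWith K (h u) (Icc 0 R))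
    (hm : ∀ u ∈ Ici (0 : ℝ), LipschitzOnWith L (metricDefect Λ κ h u) (Icc 0 R)) :
    IsBondiEvolution H R L (metricDefect Λ κ h) h (pdR R h) where
  continuousOn := hsol.1
  hasDerivWithinAt_radius u hu r hr := (hsol.2.1 u hu r hr).2.hasDerivWithinAt
  hasDerivWithinAt_time u hu r hr := by
    rw [← hsol.pdU_eq_bondiFlow hR hH hu (hh u hu) (hm u hu) hr]
    exact (hsol.2.1 u hu r hr).1.hasDerivWithinAt
  lipschitzOnWith_defect := hm
  defect_zero _ _ := metricDefect_zero ..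

end Solutions

section Decay

theorem exists_abs_metric_sub_deSitter_le (Λ κ : ℝ) {R : ℝ} (hR : 0 ≤ R) :
    ∃ C > (0 : ℝ), ∀ (h : ℝ → ℝ → ℝ) (u : ℝ) (L : ℝ≥0),
      L ≤ 1 → LipschitzOnWith L (h u) (Icc 0 R) → ∀ r ∈ Icc 0 R,
        |metricF κ h u r - 1| ≤ C * L ^ 2 ∧
        |metricFt Λ κ h u r - (1 - Λ / 3 * r ^ 2)| ≤ C * L ^ 2 := by
  obtain ⟨C₁, hC₁⟩ := exists_lipschitzOnWith_metricF κ R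
  obtain ⟨C₂, hC₂⟩ := exists_lipschitzOnWith_metricDefect Λ κ R
  refine ⟨(C₁ + C₂) * R + 1, by positivity, fun h u L hL hh r hr => ?_⟩
  have hf := abs_sub_map_zero_le_of_lipschitzOnWith (hC₁ h u L hL hh) hr
  have hft := abs_radialMean_le_of_lipschitzOnWith (hC₂ h u L hL hh) (metricDefect_zero ..) hr
  rw [metricF_zero] at hf
  rw [metricFt_eq ((continuousOn_metricF hh).mono (Icc_subset_Icc_right hr.2)) hr.1,
    add_sub_cancel_left]
  have hbound {c : ℝ≥0} (hc : (c : ℝ) ≤ C₁ + C₂) :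
      ↑(c * L ^ 2) * r ≤ ((C₁ + C₂) * R + 1) * L ^ 2 :=
    calc ↑(c * L ^ 2) * r = c * r * L ^ 2 := by push_cast; ring
      _ ≤ ((C₁ + C₂) * R + 1) * L ^ 2 := by
          gcongr
          exact (mul_le_mul hc hr.2 hr.1 (by positivity)).trans (le_add_of_nonneg_right zero_le_one)
  exact ⟨hf.trans (hbound (by simp)), hft.trans (hbound (by simp))⟩

theorem exists_small_lipschitz_constant {H R : ℝ} (hH : 0 < H) (hR : 0 ≤ R) (hHR : 1 < H * R)
    (C : ℝ≥0) : ∃ ε : ℝ≥0, 0 < ε ∧ ε ≤ decayWeight H R ∧ 1 - H ^ 2 * R ^ 2 + C * ε ^ 2 * R ≤ 0 ∧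
      C * ε ^ 2 * (2 * H * R + 3) ≤ H * decayWeight H R := by
  have hw : 0 < decayWeight H R := decayWeight_pos hH hR
  have hsq : 1 - H ^ 2 * R ^ 2 < 0 := by nlinarith
  have hlim {g : ℝ≥0 → ℝ} (hg : Continuous g) {c : ℝ} (hc : g 0 < c) :
      ∀ᶠ ε in 𝓝[>] (0 : ℝ≥0), g ε ≤ c :=
    nhdsWithin_le_nhds <| (hg.tendsto 0).eventually_le_const hc
  have hweight := hlim (g := fun ε => ε) (by fun_prop) hw
  have houter := hlim (g := fun ε => 1 - H ^ 2 * R ^ 2 + C * ε ^ 2 * R) (by fun_prop)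
    (c := 0) (by simpa using hsq)
  have hrate := hlim (g := fun ε => C * ε ^ 2 * (2 * H * R + 3)) (by fun_prop)
    (c := H * decayWeight H R) (by simpa using mul_pos hH hw)
  obtain ⟨ε, ⟨hε, hε'⟩, hpos⟩ := ((hweight.and (houter.and hrate)).and self_mem_nhdsWithin).exists
  exact ⟨ε, hpos, hε, hε'⟩

theorem metric_exponential_decay_to_deSitter_general
    (Λ κ R : ℝ) (hΛ : 0 < Λ) (hR : √(3 / Λ) < R) :
    ∃ ε > (0 : ℝ), ∃ C > (0 : ℝ), ∀ h : ℝ → ℝ → ℝ, IsC1Solution Λ κ R h →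
      (∀ u ∈ Ici (0 : ℝ), ∀ r ∈ Icc (0 : ℝ) R, |pdR R h u r| ≤ ε) →
      ∀ u ∈ Ici (0 : ℝ), ∀ r ∈ Icc (0 : ℝ) R,
        |metricF κ h u r - 1| ≤ C * exp (-2 * √(Λ / 3) * u) ∧
        |metricFt Λ κ h u r - (1 - Λ / 3 * r ^ 2)| ≤ C * exp (-2 * √(Λ / 3) * u) := by
  set H := √(Λ / 3)
  have hH : 0 < H := by positivity
  have hHsq : H ^ 2 = Λ / 3 := sq_sqrt (by positivity)
  have hR0 : 0 < R := (sqrt_nonneg _).trans_lt hR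
  have hHR : 1 < H * R := by
    rwa [← inv_div, sqrt_inv, inv_lt_iff_one_lt_mul₀ hH, mul_comm] at hR
  obtain ⟨D, hD⟩ := exists_lipschitzOnWith_metricDefect Λ κ R
  obtain ⟨C, hC, hdev⟩ := exists_abs_metric_sub_deSitter_le Λ κ hR0.le
  obtain ⟨ε, hε, hεw, hout, hrate⟩ := exists_small_lipschitz_constant hH hR0.le hHR D
  refine ⟨ε, hε, C, hC, fun h hsol hsmall u hu r hr => ?_⟩
  have hε1 : ε ≤ 1 := hεw.trans (decayWeight_le_one hH hR0.le)
  have hh : ∀ v ∈ Ici (0 : ℝ), LipschitzOnWith ε (h v) (Icc 0 R) :=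
    fun v hv => hsol.lipschitzOnWith hv (hsmall v hv)
  have hev := hsol.isBondiEvolution hR0 hHsq hh fun v hv => hD h v ε hε1 (hh v hv)
  have hlip := hev.lipschitzOnWith_exp hH (by simpa using hout) (by simpa using hrate)
    (hh 0 self_mem_Ici) hR0.le hu
  have hslope : ε / decayWeight H R * exp (-H * u) ≤ exp (-H * u) :=
    mul_le_of_le_one_left (exp_pos _).le ((div_le_one (decayWeight_pos hH hR0.le)).2 hεw)
  have hslope' : exp (-H * u) ≤ 1 := by
    rw [exp_le_one_iff, neg_mul]
    exact neg_nonpos.2 (mul_nonneg hH.le hu)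
  have hlip' := hlip.weaken (Real.toNNReal_le_toNNReal hslope)
  have hfinal := hdev h u _ (toNNReal_le_one.2 hslope') hlip' r hr
  rwa [coe_toNNReal _ (exp_pos _).le, ← exp_nat_mul, Nat.cast_ofNat, ← mul_assoc, mul_neg,
    ← neg_mul] at hfinal

end Decay

/-- Exponential convergence of the metric coefficients to those of
de Sitter in Bondi coordinates (`f ≡ 1`, `f̃ = 1 − (Λ/3)r²`) at rate `2H`, `H = √(Λ/3)`,
for C¹ solutions with small `sup(|h|+|∂_r h|)`. -/
theorem metric_exponential_decay_to_deSitter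
    (Λ κ R : ℝ) (hΛ : 0 < Λ) (hκ : 0 < κ) (hR : Real.sqrt (3 / Λ) < R) :
    ∃ ε > (0:ℝ), ∀ h : ℝ → ℝ → ℝ, IsC1Solution Λ κ R h →
      (∀ u ∈ Ici (0:ℝ), ∀ r ∈ Icc (0:ℝ) R, |h u r| + |pdR R h u r| < ε) →
      ∃ C > (0:ℝ), ∀ u ∈ Ici (0:ℝ), ∀ r ∈ Icc (0:ℝ) R,
        |metricF κ h u r - 1| ≤ C * Real.exp (-2 * Real.sqrt (Λ / 3) * u) ∧
        |metricFt Λ κ h u r - (1 - Λ / 3 * r ^ 2)| ≤ C * Real.exp (-2 * Real.sqrt (Λ / 3) * u) := by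
  obtain ⟨ε, hε, C, hC, hdecay⟩ := metric_exponential_decay_to_deSitter_general Λ κ R hΛ hR
  exact ⟨ε, hε, fun h hsol hsmall => ⟨C, hC, hdecay h hsol fun u hu r hr =>
    (le_add_of_nonneg_left (abs_nonneg _)).trans (hsmall u hu r hr).le⟩⟩
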